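/- arXiv:2104.11310 — 2 statements merged into one kernel-verified Lean document; each statement's English description precedes it below -/
import Mathlib

section
/- Let ε < 0.3 and let F = (X_1, …, X_n) with X_i ∈ ℝ^{d×d_i} and n > d be an ε-nearly equal-norm Parseval matrix frame. Then there exists an equal-norm Parseval matrix frame W = (W_1, …, W_n) with W_i ∈ ℝ^{d×d_i} such that dist²(F, W) ≤ 26·ε·d². -/
open scoped BigOperators
open Matrix

namespace MFrames

/-- The squared Frobenius norm of a real matrix. -/
noncomputable def frobSq {α β : Type*} [Fintype α] [Fintype β] (X : Matrix α β ℝ) : ℝ :=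
  ∑ i, ∑ j, X i j ^ 2

variable {d n : ℕ} {m : Fin n → ℕ}

/-- Squared distance between two tuples of matrices. -/
noncomputable def dist2 (F G : ∀ i : Fin n, Matrix (Fin d) (Fin (m i)) ℝ) : ℝ :=
  ∑ i, frobSq (F i - G i)

/-- The frame operator `∑ Xᵢ Xᵢᵀ`. -/
noncomputable def frameOp (F : ∀ i : Fin n, Matrix (Fin d) (Fin (m i)) ℝ) :
    Matrix (Fin d) (Fin d) ℝ :=
  ∑ i, F i * (F i)ᵀ

/-- `F` is a matrix frame: `∑ Xᵢ Xᵢᵀ` is positive definite. -/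
def IsMatrixFrame (F : ∀ i : Fin n, Matrix (Fin d) (Fin (m i)) ℝ) : Prop :=
  (frameOp F).PosDef

/-- `F` is an ε-nearly equal-norm Parseval matrix frame. -/
def NearlyENParseval (ε : ℝ) (F : ∀ i : Fin n, Matrix (Fin d) (Fin (m i)) ℝ) : Prop :=
  (frameOp F - (1 - ε) • (1 : Matrix (Fin d) (Fin d) ℝ)).PosSemidef ∧
  ((1 + ε) • (1 : Matrix (Fin d) (Fin d) ℝ) - frameOp F).PosSemidef ∧
  ∀ i, (1 - ε) * ((d : ℝ) / n) ≤ frobSq (F i) ∧ frobSq (F i) ≤ (1 + ε) * ((d : ℝ) / n)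

/-- `F` is an equal-norm Parseval matrix frame. -/
def EqualNormParseval (F : ∀ i : Fin n, Matrix (Fin d) (Fin (m i)) ℝ) : Prop :=
  frameOp F = 1 ∧ ∀ i, frobSq (F i) = (d : ℝ) / n

/-- The columns of the concatenated matrix `[X₁ | … | Xₙ]`. -/
def col (F : ∀ i : Fin n, Matrix (Fin d) (Fin (m i)) ℝ) (p : (i : Fin n) × Fin (m i)) :
    Fin d → ℝ :=
  fun r => F p.1 r p.2

/-- `F` is generic: `n > d` and any `d` of the columns of `[X₁ | … | Xₙ]` are linearly
independent (hence a basis of `ℝ^d`). -/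
def Generic (F : ∀ i : Fin n, Matrix (Fin d) (Fin (m i)) ℝ) : Prop :=
  d < n ∧ ∀ S : Finset ((i : Fin n) × Fin (m i)), S.card = d →
    LinearIndependent ℝ (fun p : S => col F (p : (i : Fin n) × Fin (m i)))

/-- Column span of a matrix. -/
def colSpan {k : ℕ} (X : Matrix (Fin d) (Fin k) ℝ) : Submodule ℝ (Fin d → ℝ) :=
  Submodule.span ℝ (Set.range Xᵀ)

/-- The orbit polytope `K_F` of a tuple of matrices. -/
def orbitPolytope (F : ∀ i : Fin n, Matrix (Fin d) (Fin (m i)) ℝ) : Set (Fin n → ℝ) :=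
  {c | (∀ i, 0 ≤ c i) ∧ (∑ i, c i = d) ∧
    ∀ I : Finset (Fin n),
      ∑ i ∈ I, c i ≤ (Module.finrank ℝ ↥(⨆ i ∈ I, colSpan (F i)) : ℝ)}

/-- `Φ_F(t) = log det (∑ e^{tᵢ} Xᵢ Xᵢᵀ)`. -/
noncomputable def Phi (F : ∀ i : Fin n, Matrix (Fin d) (Fin (m i)) ℝ) (t : Fin n → ℝ) : ℝ :=
  Real.log (∑ i, Real.exp (t i) • (F i * (F i)ᵀ)).det

/-- The objective function `Φ_F(t) - ⟨t, c⟩` whose infimum over `t` is `f_F(c)`. -/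
noncomputable def obj (F : ∀ i : Fin n, Matrix (Fin d) (Fin (m i)) ℝ)
    (c : Fin n → ℝ) (t : Fin n → ℝ) : ℝ :=
  Phi F t - ∑ i, t i * c i

/-- `Δ_S` for `S ∈ 𝒜`, where `S` is encoded as a function `σ` assigning to each `i` a subset
`σ i ⊆ {1,…,dᵢ}` of the columns of `Xᵢ` (with `i ∈ S` iff `σ i ≠ ∅`). -/
noncomputable def Delta (F : ∀ i : Fin n, Matrix (Fin d) (Fin (m i)) ℝ)
    (σ : ∀ i : Fin n, Finset (Fin (m i))) : ℝ :=
  (∑ i, ∑ k ∈ σ i, Matrix.of (fun r s : Fin d => F i r k * F i s k)).det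

/-- The index set `𝒜`: collections of subsets of columns with `d` columns in total. -/
def indexA (d : ℕ) (m : Fin n → ℕ) : Finset (∀ i : Fin n, Finset (Fin (m i))) :=
  Finset.univ.filter fun σ => (∑ i, (σ i).card) = d

/-- Membership in the semialgebraic set `𝕍(F, c)`.  (Summing `(σ i).card • ⋯` over all of
`𝒜` is the same as summing `|Sᵢ| • ⋯` over those `S ∈ 𝒜` with `i ∈ S`.) -/
noncomputable def inVariety (F : ∀ i : Fin n, Matrix (Fin d) (Fin (m i)) ℝ)
    (c ξ : Fin n → ℝ) : Prop :=
  (∀ i, 0 < ξ i) ∧ ∀ i,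
    (∑ σ ∈ indexA d m, ((σ i).card : ℝ) * (∏ l, ξ l ^ (σ l).card) * Delta F σ)
      = c i * ∑ σ ∈ indexA d m, (∏ l, ξ l ^ (σ l).card) * Delta F σ

/-- `A` transforms `(F, c)` into a radial isotropic frame. -/
noncomputable def TransformsToRIF (F : ∀ i : Fin n, Matrix (Fin d) (Fin (m i)) ℝ)
    (c : Fin n → ℝ) (A : Matrix (Fin d) (Fin d) ℝ) : Prop :=
  ∑ i, (c i / frobSq (A * F i)) • ((A * F i) * (A * F i)ᵀ) = 1

/-- Columns of `X` all orthogonal to the subspace `T`, i.e. `Col(X) ⊆ T^⊥`. -/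
def colsPerp {k : ℕ} (X : Matrix (Fin d) (Fin k) ℝ) (T : Submodule ℝ (Fin d → ℝ)) : Prop :=
  ∀ x ∈ T, Xᵀ.mulVec x = 0

end MFrames

namespace MFrames

section helpers

/-- Total variation bound for one index, without sorting. -/
lemma tv_one {d : ℕ} (a b ν : Fin d → ℝ) (τ : ℝ) (hτ : 0 < τ) (ha : ∀ j, 0 ≤ a j)
    (hb : ∀ j, b j = τ * ν j * a j) (hs : ∑ j, a j = ∑ j, b j) :
    ∑ j, |a j - b j| ≤ 2 * ∑ l, ∑ j ∈ Finset.univ.filter (fun j => ν j ≤ ν l), (a j - b j) := by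
  have hz : ∑ j, (a j - b j) = 0 := by rw [Finset.sum_sub_distrib, hs, sub_self]
  have hab : ∀ j, a j - b j = (1 - τ * ν j) * a j := by intro j; rw [hb]; ring
  have hP : ∀ l, 0 ≤ ∑ j ∈ Finset.univ.filter (fun j => ν j ≤ ν l), (a j - b j) := by
    intro l
    by_cases h : τ * ν l ≤ 1
    · apply Finset.sum_nonneg
      intro j hj
      have hj' : ν j ≤ ν l := by simpa using hj
      rw [hab]
      apply mul_nonneg _ (ha j)
      nlinarith
    · have := Finset.sum_filter_add_sum_filter_not Finset.univ (fun j => ν j ≤ ν l)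
        (fun j => a j - b j)
      rw [hz] at this
      have h2 : ∑ j ∈ Finset.univ.filter (fun j => ¬ ν j ≤ ν l), (a j - b j) ≤ 0 := by
        apply Finset.sum_nonpos
        intro j hj
        have hj' : ν l < ν j := by simpa using hj
        rw [hab]
        apply mul_nonpos_of_nonpos_of_nonneg _ (ha j)
        nlinarith
      linarith
  set T := Finset.univ.filter (fun j => τ * ν j ≤ 1) with hT
  have habs : ∑ j, |a j - b j| = 2 * ∑ j ∈ T, (a j - b j) := by
    have h1 := Finset.sum_filter_add_sum_filter_not Finset.univ (fun j => τ * ν j ≤ 1)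
        (fun j => |a j - b j|)
    have h2 := Finset.sum_filter_add_sum_filter_not Finset.univ (fun j => τ * ν j ≤ 1)
        (fun j => a j - b j)
    have h3 : ∑ j ∈ Finset.univ.filter (fun j => τ * ν j ≤ 1), |a j - b j| =
        ∑ j ∈ Finset.univ.filter (fun j => τ * ν j ≤ 1), (a j - b j) := by
      apply Finset.sum_congr rfl
      intro j hj
      have hj' : τ * ν j ≤ 1 := by simpa using hj
      rw [abs_of_nonneg]
      rw [hab]
      exact mul_nonneg (by linarith) (ha j)
    have h4 : ∑ j ∈ Finset.univ.filter (fun j => ¬ τ * ν j ≤ 1), |a j - b j| =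
        - ∑ j ∈ Finset.univ.filter (fun j => ¬ τ * ν j ≤ 1), (a j - b j) := by
      rw [← Finset.sum_neg_distrib]
      apply Finset.sum_congr rfl
      intro j hj
      have hj' : 1 < τ * ν j := by simpa using hj
      rw [abs_of_nonpos]
      rw [hab]
      exact mul_nonpos_of_nonpos_of_nonneg (by linarith) (ha j)
    rw [hT]
    linarith
  rw [habs]
  apply mul_le_mul_of_nonneg_left _ (by norm_num)
  rcases T.eq_empty_or_nonempty with h0 | hne
  · rw [h0, Finset.sum_empty]
    exact Finset.sum_nonneg fun l _ => hP l
  · obtain ⟨l, hl, hmax⟩ := T.exists_max_image ν hne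
    have hTl : T = Finset.univ.filter (fun j => ν j ≤ ν l) := by
      ext j
      constructor
      · intro hj; simpa using hmax j hj
      · intro hj
        have hj' : ν j ≤ ν l := by simpa using hj
        have hl' : τ * ν l ≤ 1 := by simpa [hT] using hl
        rw [hT]
        simp only [Finset.mem_filter, Finset.mem_univ, true_and]
        nlinarith
    rw [hTl]
    exact Finset.single_le_sum (f := fun l => ∑ j ∈ Finset.univ.filter (fun j => ν j ≤ ν l),
      (a j - b j)) (fun l _ => hP l) (Finset.mem_univ l)

lemma tv_all {d n : ℕ} (a b : Fin n → Fin d → ℝ) (ν : Fin d → ℝ) (τ : Fin n → ℝ) (δ : ℝ)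
    (hδ : 0 ≤ δ)
    (hτ : ∀ i, 0 < τ i) (ha : ∀ i j, 0 ≤ a i j)
    (hb : ∀ i j, b i j = τ i * ν j * a i j) (hs : ∀ i, ∑ j, a i j = ∑ j, b i j)
    (h1 : ∀ j, ∑ i, b i j = 1) (h2 : ∀ j, ∑ i, a i j ≤ 1 + δ) :
    ∑ i, ∑ j, |a i j - b i j| ≤ 2 * (d:ℝ)^2 * δ := by
  calc ∑ i, ∑ j, |a i j - b i j|
      ≤ ∑ i, 2 * ∑ l, ∑ j ∈ Finset.univ.filter (fun j => ν j ≤ ν l), (a i j - b i j) :=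
        Finset.sum_le_sum fun i _ => tv_one _ _ ν (τ i) (hτ i) (ha i) (hb i) (hs i)
    _ = 2 * ∑ l, ∑ j ∈ Finset.univ.filter (fun j => ν j ≤ ν l), ∑ i, (a i j - b i j) := by
        rw [← Finset.mul_sum, Finset.sum_comm]
        congr 1
        exact Finset.sum_congr rfl fun l _ => Finset.sum_comm
    _ ≤ 2 * ∑ l : Fin d, ∑ j : Fin d, δ := by
        apply mul_le_mul_of_nonneg_left _ (by norm_num)
        apply Finset.sum_le_sum
        intro l _
        calc ∑ j ∈ Finset.univ.filter (fun j => ν j ≤ ν l), ∑ i, (a i j - b i j)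
            ≤ ∑ j ∈ Finset.univ.filter (fun j => ν j ≤ ν l), δ := by
              apply Finset.sum_le_sum
              intro j _
              rw [Finset.sum_sub_distrib, h1]
              linarith [h2 j]
          _ ≤ _ := Finset.sum_le_sum_of_subset_of_nonneg (Finset.filter_subset _ _)
              (fun _ _ _ => hδ)
    _ = _ := by simp; ring

lemma frobSq_nonneg {α β : Type*} [Fintype α] [Fintype β] (X : Matrix α β ℝ) : 0 ≤ frobSq X :=
  Finset.sum_nonneg fun _ _ => Finset.sum_nonneg fun _ _ => sq_nonneg _

lemma entry_sq_le {α β : Type*} [Fintype α] [Fintype β] (X : Matrix α β ℝ) (i : α) (j : β) :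
    X i j ^ 2 ≤ frobSq X := by
  unfold frobSq
  calc X i j ^ 2 ≤ ∑ j, X i j ^ 2 :=
        Finset.single_le_sum (f := fun j => X i j ^ 2) (fun _ _ => sq_nonneg _) (Finset.mem_univ j)
    _ ≤ _ := Finset.single_le_sum (f := fun i => ∑ j, X i j ^ 2)
        (fun _ _ => Finset.sum_nonneg fun _ _ => sq_nonneg _) (Finset.mem_univ i)

lemma frobSq_eq_trace {α β : Type*} [Fintype α] [Fintype β] (X : Matrix α β ℝ) :
    frobSq X = (X * Xᵀ).trace := by
  simp [frobSq, Matrix.trace, Matrix.mul_apply, sq]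

lemma frobSq_eq_trace' {α β : Type*} [Fintype α] [Fintype β] (X : Matrix α β ℝ) :
    frobSq X = (Xᵀ * X).trace := by
  rw [frobSq_eq_trace, Matrix.trace_mul_comm]

lemma frobSq_mul_of_gram {α β γ : Type*} [Fintype α] [Fintype β] [Fintype γ]
    (M N : Matrix α β ℝ) (h : Mᵀ * M = Nᵀ * N) (X : Matrix β γ ℝ) :
    frobSq (M * X) = frobSq (N * X) := by
  rw [frobSq_eq_trace', frobSq_eq_trace', Matrix.transpose_mul, Matrix.transpose_mul,
    Matrix.mul_assoc, Matrix.mul_assoc, ← Matrix.mul_assoc Mᵀ, ← Matrix.mul_assoc Nᵀ, h]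

lemma frobSq_orth_mul {α γ : Type*} [Fintype α] [DecidableEq α] [Fintype γ]
    (U : Matrix α α ℝ) (h : Uᵀ * U = 1) (X : Matrix α γ ℝ) :
    frobSq (U * X) = frobSq X := by
  have := frobSq_mul_of_gram U 1 (by simp [h]) X
  simpa using this

lemma frobSq_add_le {α β : Type*} [Fintype α] [Fintype β] (X Y : Matrix α β ℝ) :
    frobSq (X + Y) ≤ 2 * frobSq X + 2 * frobSq Y := by
  unfold frobSq
  simp only [Finset.mul_sum, ← Finset.sum_add_distrib]
  refine Finset.sum_le_sum fun i _ => Finset.sum_le_sum fun j _ => ?_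
  simp only [Matrix.add_apply]
  nlinarith [sq_nonneg (X i j - Y i j)]

lemma frobSq_smul {α β : Type*} [Fintype α] [Fintype β] (c : ℝ) (X : Matrix α β ℝ) :
    frobSq (c • X) = c ^ 2 * frobSq X := by
  simp [frobSq, Finset.mul_sum, mul_pow]

/-- Crude Hadamard bound. -/
lemma det_sq_le {d : ℕ} (A : Matrix (Fin d) (Fin d) ℝ) (p : Fin d → ℝ)
    (hp : ∀ r j, A r j ^ 2 ≤ p j) :
    A.det ^ 2 ≤ (d.factorial : ℝ) ^ 2 * ∏ j, p j := by
  have hp0 : ∀ j, 0 ≤ p j := fun j => le_trans (sq_nonneg _) (hp j j)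
  have h1 : |A.det| ≤ (d.factorial : ℝ) * ∏ j, Real.sqrt (p j) := by
    rw [Matrix.det_apply]
    calc |∑ σ : Equiv.Perm (Fin d), Equiv.Perm.sign σ • ∏ i, A (σ i) i|
        ≤ ∑ σ : Equiv.Perm (Fin d), |Equiv.Perm.sign σ • ∏ i, A (σ i) i| :=
          Finset.abs_sum_le_sum_abs _ _
      _ ≤ ∑ σ : Equiv.Perm (Fin d), ∏ j, Real.sqrt (p j) := by
          apply Finset.sum_le_sum
          intro σ _
          have : |Equiv.Perm.sign σ • ∏ i, A (σ i) i| = ∏ i, |A (σ i) i| := by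
            rcases Int.units_eq_one_or (Equiv.Perm.sign σ) with h | h <;>
              simp [h, Finset.abs_prod, Units.smul_def]
          rw [this]
          exact Finset.prod_le_prod (fun _ _ => abs_nonneg _)
            fun i _ => Real.abs_le_sqrt (hp _ _)
      _ = _ := by simp [Fintype.card_perm]
  calc A.det ^ 2 = |A.det| ^ 2 := (sq_abs _).symm
    _ ≤ ((d.factorial : ℝ) * ∏ j, Real.sqrt (p j)) ^ 2 :=
      pow_le_pow_left₀ (abs_nonneg _) h1 2
    _ = _ := by
      rw [mul_pow, ← Finset.prod_pow]
      congr 1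
      exact Finset.prod_congr rfl fun j _ => Real.sq_sqrt (hp0 j)

/-- Combinatorial coercivity. -/
lemma prod_coercive {d n : ℕ} (hd : 0 < d) (hdn : d < n) (p : Fin n → ℝ) (δ : ℝ) (hδ : 0 < δ)
    (hδ1 : δ ≤ 1) (hp : ∀ i, 0 ≤ p i)
    (h : ∀ S : Finset (Fin n), S.card = d → δ ≤ ∏ i ∈ S, p i) (k : Fin n) :
    δ ^ (n - d) * p k ≤ ∏ i, p i := by
  classical
  set B := Finset.univ.filter (fun i => p i < δ) with hB
  have hBc : B.card < d := by
    by_contra hc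
    push Not at hc
    obtain ⟨S, hSB, hS⟩ := Finset.exists_subset_card_eq hc
    have h1 := h S hS
    have hne : S.Nonempty := by rw [← Finset.card_pos]; omega
    have h2 : ∏ i ∈ S, p i < ∏ i ∈ S, δ := by
      by_cases h0 : ∃ i ∈ S, p i = 0
      · obtain ⟨i, hi, hpi⟩ := h0
        rw [Finset.prod_eq_zero hi hpi]
        exact Finset.prod_pos fun _ _ => hδ
      · push Not at h0
        apply Finset.prod_lt_prod_of_nonempty _ _ hne
        · intro i hi
          exact lt_of_le_of_ne (hp i) (Ne.symm (h0 i hi))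
        · intro i hi
          have := hSB hi
          simpa [hB] using this
    rw [Finset.prod_const, hS] at h2
    have h3 : δ ^ d ≤ δ := pow_le_of_le_one hδ.le hδ1 (by omega)
    linarith
  obtain ⟨S, hBS, hSu, hS⟩ := Finset.exists_subsuperset_card_eq (s := B.erase k)
    (t := Finset.univ.erase k) (n := d) (Finset.erase_subset_erase _ (Finset.subset_univ _))
    (by have := Finset.card_erase_le (s := B) (a := k); omega)
    (by rw [Finset.card_erase_of_mem (Finset.mem_univ _), Finset.card_fin]; omega)
  rw [← Finset.mul_prod_erase Finset.univ p (Finset.mem_univ k),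
    ← Finset.prod_sdiff hSu]
  have hR : δ ^ (n - 1 - d) ≤ ∏ i ∈ (Finset.univ.erase k) \ S, p i := by
    have hc : ((Finset.univ.erase k) \ S).card = n - 1 - d := by
      rw [Finset.card_sdiff_of_subset hSu, Finset.card_erase_of_mem (Finset.mem_univ _),
        Finset.card_fin, hS]
    rw [← hc, ← Finset.prod_const]
    apply Finset.prod_le_prod (fun _ _ => hδ.le)
    intro i hi
    rw [Finset.mem_sdiff] at hi
    by_contra hlt
    push Not at hlt
    apply hi.2
    apply hBS
    rw [Finset.mem_erase]
    exact ⟨(Finset.mem_erase.mp hi.1).1, by simpa [hB] using hlt⟩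
  have hSd := h S hS
  have : δ ^ (n - d) = δ ^ (n - 1 - d) * δ := by
    rw [← pow_succ]; congr 1; omega
  rw [this, mul_comm (p k)]
  apply mul_le_mul_of_nonneg_right _ (hp k)
  exact mul_le_mul hR hSd hδ.le (le_trans (by positivity) hR)

/-- Genericity of a choice of columns. -/
def GenCols {d n : ℕ} (x : Fin n → Fin d → ℝ) : Prop :=
  ∀ f : Fin d → Fin n, Function.Injective f →
    (Matrix.of (fun r j => x (f j) r)).det ≠ 0

lemma exists_delta {d n : ℕ} (hdn : d < n) (x : Fin n → Fin d → ℝ) (hx : GenCols x) :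
    ∃ δ : ℝ, 0 < δ ∧ δ ≤ 1 ∧ ∀ (M : Matrix (Fin d) (Fin d) ℝ) (p : Fin n → ℝ), M.det = 1 →
      (∀ i r, (M.mulVec (x i)) r ^ 2 ≤ p i) → ∀ S : Finset (Fin n), S.card = d →
        δ ≤ ∏ i ∈ S, p i := by
  have : Nonempty {f : Fin d → Fin n // Function.Injective f} :=
    ⟨⟨Fin.castLE hdn.le, Fin.castLE_injective _⟩⟩
  obtain ⟨f₀, hf₀⟩ := Finite.exists_min
    (fun f : {f : Fin d → Fin n // Function.Injective f} =>
      (Matrix.of (fun r j => x (f.1 j) r)).det ^ 2 / (d.factorial : ℝ) ^ 2)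
  have hfac : (0:ℝ) < (d.factorial : ℝ) ^ 2 := by positivity
  refine ⟨min 1 ((Matrix.of (fun r j => x (f₀.1 j) r)).det ^ 2 / (d.factorial : ℝ) ^ 2), ?_,
    min_le_left _ _, ?_⟩
  · apply lt_min one_pos
    apply div_pos _ hfac
    exact sq_pos_of_ne_zero (hx f₀.1 f₀.2)
  · intro M p hM hp S hS
    let e := S.orderEmbOfFin hS
    have h1 := hf₀ ⟨e, e.injective⟩
    refine le_trans (min_le_right _ _) (le_trans h1 ?_)
    rw [div_le_iff₀' hfac]
    have h2 := det_sq_le (M * Matrix.of (fun r j => x (e j) r)) (fun j => p (e j)) (by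
      intro r j
      have := hp (e j) r
      simpa [Matrix.mul_apply, Matrix.mulVec, dotProduct] using this)
    rw [Matrix.det_mul, hM, one_mul] at h2
    have h3 : ∏ i ∈ S, p i = ∏ j, p (e j) := by
      conv_lhs => rw [← Finset.image_orderEmbOfFin_univ S hS]
      rw [Finset.prod_image]
      intro a _ b _ hab
      exact e.injective hab
    rw [h3]
    exact h2

lemma exists_minimizer {d n : ℕ} (hd : 0 < d) (hdn : d < n) {m : Fin n → ℕ}
    (X : ∀ i : Fin n, Matrix (Fin d) (Fin (m i)) ℝ) (k : ∀ i, Fin (m i))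
    (hx : GenCols (fun i r => X i r (k i))) :
    ∃ M : Matrix (Fin d) (Fin d) ℝ, M.det = 1 ∧ (∀ i, 0 < frobSq (M * X i)) ∧
      ∀ N : Matrix (Fin d) (Fin d) ℝ, N.det = 1 →
        ∏ i, frobSq (M * X i) ≤ ∏ i, frobSq (N * X i) := by
  obtain ⟨δ, hδ, hδ1, hS⟩ := exists_delta hdn _ hx
  set x : Fin n → Fin d → ℝ := fun i r => X i r (k i) with hxdef
  have hent : ∀ (M : Matrix (Fin d) (Fin d) ℝ) i r, (M.mulVec (x i)) r ^ 2 ≤ frobSq (M * X i) := by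
    intro M i r
    have := entry_sq_le (M * X i) r (k i)
    simpa [Matrix.mul_apply, Matrix.mulVec, dotProduct, hxdef] using this
  have hco : ∀ M : Matrix (Fin d) (Fin d) ℝ, M.det = 1 → ∀ i,
      δ ^ (n - d) * frobSq (M * X i) ≤ ∏ i, frobSq (M * X i) := by
    intro M hM i
    exact prod_coercive hd hdn _ δ hδ hδ1 (fun i => frobSq_nonneg _)
      (hS M _ hM (hent M)) i
  set f : Fin d → Fin n := Fin.castLE hdn.le
  have hf := hx f (Fin.castLE_injective _)
  set B : Matrix (Fin d) (Fin d) ℝ := Matrix.of (fun r j => x (f j) r) with hB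
  have hBu : IsUnit B.det := isUnit_iff_ne_zero.mpr hf
  set g := ∏ i, frobSq (((1 : Matrix (Fin d) (Fin d) ℝ)) * X i) with hg
  set T := g / δ ^ (n - d) with hTdef
  set R := ∑ r : Fin d, ∑ s : Fin d, ∑ j : Fin d, Real.sqrt T * |B⁻¹ j s| with hR
  have hbd : ∀ M : Matrix (Fin d) (Fin d) ℝ, M.det = 1 → ∏ i, frobSq (M * X i) ≤ g →
      ∀ r s, M r s ∈ Set.Icc (-R) R := by
    intro M hM hMg r s
    have hT : ∀ i, frobSq (M * X i) ≤ T := by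
      intro i
      rw [hTdef, le_div_iff₀' (by positivity)]
      exact (hco M hM i).trans hMg
    have h1 : M = (M * B) * B⁻¹ := by
      rw [Matrix.mul_assoc, Matrix.mul_nonsing_inv _ hBu, Matrix.mul_one]
    have h2 : ∀ j, |(M * B) r j| ≤ Real.sqrt T := by
      intro j
      apply Real.abs_le_sqrt
      refine le_trans ?_ (hT (f j))
      have := hent M (f j) r
      simpa [Matrix.mul_apply, Matrix.mulVec, dotProduct, hB] using this
    have h3 : |M r s| ≤ ∑ j : Fin d, Real.sqrt T * |B⁻¹ j s| := by
      conv_lhs => rw [h1]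
      rw [Matrix.mul_apply]
      refine (Finset.abs_sum_le_sum_abs _ _).trans (Finset.sum_le_sum fun j _ => ?_)
      rw [abs_mul]
      exact mul_le_mul_of_nonneg_right (h2 j) (abs_nonneg _)
    have h4 : ∑ j : Fin d, Real.sqrt T * |B⁻¹ j s| ≤ R := by
      have hnn : ∀ s, 0 ≤ ∑ j : Fin d, Real.sqrt T * |B⁻¹ j s| := fun s =>
        Finset.sum_nonneg fun j _ => by positivity
      calc ∑ j : Fin d, Real.sqrt T * |B⁻¹ j s|
          ≤ ∑ s, ∑ j : Fin d, Real.sqrt T * |B⁻¹ j s| :=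
            Finset.single_le_sum (f := fun s => ∑ j : Fin d, Real.sqrt T * |B⁻¹ j s|)
              (fun s _ => hnn s) (Finset.mem_univ s)
        _ ≤ R := Finset.single_le_sum
              (f := fun r : Fin d => ∑ s, ∑ j : Fin d, Real.sqrt T * |B⁻¹ j s|)
              (fun r _ => Finset.sum_nonneg fun s _ => hnn s) (Finset.mem_univ r)
    exact abs_le.mp (h3.trans h4)
  let K : Set (Matrix (Fin d) (Fin d) ℝ) :=
    (Set.univ.pi fun _ => Set.univ.pi fun _ => Set.Icc (-R) R) ∩ {M | M.det = 1}
  have hK : IsCompact K := by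
    apply IsCompact.inter_right
    · exact isCompact_univ_pi fun _ => isCompact_univ_pi fun _ => isCompact_Icc
    · exact isClosed_eq (Continuous.matrix_det continuous_id) continuous_const
  have h1K : (1 : Matrix (Fin d) (Fin d) ℝ) ∈ K :=
    ⟨fun r _ s _ => hbd 1 Matrix.det_one le_rfl r s, Matrix.det_one⟩
  have hcont : Continuous fun M : Matrix (Fin d) (Fin d) ℝ => ∏ i, frobSq (M * X i) := by
    unfold frobSq
    simp only [Matrix.mul_apply]
    fun_prop
  obtain ⟨M, hMK, hMmin⟩ := hK.exists_isMinOn ⟨1, h1K⟩ hcont.continuousOn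
  refine ⟨M, hMK.2, ?_, ?_⟩
  · intro i
    have hpos : 0 < ∏ i, frobSq (M * X i) := by
      have h0 : 0 < ∏ j ∈ Finset.univ.map (Fin.castLEEmb hdn.le), frobSq (M * X j) :=
        lt_of_lt_of_le hδ (hS M _ hMK.2 (hent M) _ (by simp))
      have h5 : ∀ k, 0 < frobSq (M * X k) := by
        intro k
        rcases (frobSq_nonneg (M * X k)).lt_or_eq with h | h
        · exact h
        · exfalso
          obtain ⟨S, hkS, -, hSc⟩ := Finset.exists_subsuperset_card_eq
            (s := {k}) (t := Finset.univ) (n := d) (Finset.subset_univ _) (by simp only [Finset.card_singleton]; omega)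
            (by simpa using hdn.le)
          have := hS M _ hMK.2 (hent M) S hSc
          rw [Finset.prod_eq_zero (hkS (Finset.mem_singleton_self k)) h.symm] at this
          linarith
      exact Finset.prod_pos fun k _ => h5 k
    exact lt_of_le_of_ne (frobSq_nonneg _) fun h =>
      hpos.ne' (Finset.prod_eq_zero (Finset.mem_univ i) h.symm)
  · intro N hN
    by_cases hNg : ∏ i, frobSq (N * X i) ≤ g
    · exact hMmin ⟨fun r _ s _ => hbd N hN hNg r s, hN⟩
    · push Not at hNg
      exact (hMmin h1K).trans hNg.le

/-- Algebraic first-order condition. -/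
lemma scalar_of_min {d : ℕ} (S : Matrix (Fin d) (Fin d) ℝ) (hsym : Sᵀ = S)
    (h : ∀ N : Matrix (Fin d) (Fin d) ℝ, N.det = 1 → S.trace ≤ (N * S * Nᵀ).trace) :
    (∀ a b, a ≠ b → S a b = 0) ∧ ∀ a b, S a a = S b b := by
  constructor
  · intro a b hab
    have key : ∀ t : ℝ, 0 ≤ 2 * t * S a b + t ^ 2 * S b b := by
      intro t
      have h1 := h (Matrix.transvection a b t) (Matrix.det_transvection_of_ne a b hab t)
      have hs : S b a = S a b := by conv_lhs => rw [← hsym, Matrix.transpose_apply]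
      have h2 : (Matrix.transvection a b t * S * (Matrix.transvection a b t)ᵀ).trace =
          S.trace + 2 * t * S a b + t ^ 2 * S b b := by
        rw [Matrix.transvection, Matrix.transpose_add, Matrix.add_mul, Matrix.mul_add,
          Matrix.add_mul, Matrix.add_mul]
        simp only [Matrix.transpose_one, Matrix.mul_one, Matrix.one_mul, Matrix.trace_add,
          Matrix.transpose_single]
        rw [Matrix.trace_mul_comm S, Matrix.trace_mul_comm (Matrix.single a b t * S),
          ← Matrix.mul_assoc, Matrix.single_mul_single_same]
        simp only [Matrix.trace_single_mul, hs]
        simp only [smul_eq_mul]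
        ring
      rw [h2] at h1
      linarith
    by_contra hne
    have hSb : 0 ≤ S b b := by
      have e1 := key 1
      have e2 := key (-1)
      linarith
    rcases hSb.lt_or_eq with hp | hp
    · have := key (-(S a b) / S b b)
      have e : 2 * (-(S a b) / S b b) * S a b + (-(S a b) / S b b) ^ 2 * S b b
          = - (S a b ^ 2 / S b b) := by field_simp; ring
      rw [e] at this
      have : 0 < S a b ^ 2 / S b b := by positivity
      linarith
    · have := key (- S a b)
      rw [← hp] at this
      have : 0 < S a b ^ 2 := by positivity
      nlinarith
  · have key : ∀ a b, a ≠ b → ∀ v : ℝ, 0 < v →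
        0 ≤ (v ^ 2 - 1) * S a a + (v⁻¹ ^ 2 - 1) * S b b := by
      intro a b hab v hv
      set D : Fin d → ℝ := Function.update (Function.update (fun _ => 1) b v⁻¹) a v with hD
      have hDa : D a = v := by simp [hD]
      have hDb : D b = v⁻¹ := by simp [hD, Function.update_of_ne hab.symm]
      have hDo : ∀ c, c ≠ a → c ≠ b → D c = 1 := by
        intro c hca hcb; simp [hD, Function.update_of_ne hca, Function.update_of_ne hcb]
      have hdet : (Matrix.diagonal D).det = 1 := by
        rw [Matrix.det_diagonal, ← Finset.mul_prod_erase _ _ (Finset.mem_univ a),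
          ← Finset.mul_prod_erase _ _ (Finset.mem_erase.mpr ⟨hab.symm, Finset.mem_univ b⟩),
          hDa, hDb, Finset.prod_eq_one]
        · field_simp
        · intro c hc
          simp only [Finset.mem_erase, Finset.mem_univ, and_true] at hc
          exact hDo c hc.2 hc.1
      have h1 := h _ hdet
      have h2 : (Matrix.diagonal D * S * (Matrix.diagonal D)ᵀ).trace - S.trace
          = ∑ c, (D c ^ 2 - 1) * S c c := by
        rw [Matrix.trace, Matrix.trace, ← Finset.sum_sub_distrib]
        apply Finset.sum_congr rfl
        intro c _
        rw [Matrix.diagonal_transpose, Matrix.diag_apply, Matrix.mul_diagonal,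
          Matrix.diagonal_mul, Matrix.diag_apply]
        ring
      have h3 : ∑ c, (D c ^ 2 - 1) * S c c =
          (v ^ 2 - 1) * S a a + (v⁻¹ ^ 2 - 1) * S b b := by
        rw [← Finset.add_sum_erase _ _ (Finset.mem_univ a),
          ← Finset.add_sum_erase _ _ (Finset.mem_erase.mpr ⟨hab.symm, Finset.mem_univ b⟩),
          hDa, hDb, Finset.sum_eq_zero]
        · ring
        · intro c hc
          simp only [Finset.mem_erase, Finset.mem_univ, and_true] at hc
          rw [hDo c hc.2 hc.1]; ring
      linarith
    have main : ∀ a b, a ≠ b → S b b ≤ S a a := by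
      intro a b hab
      by_contra hlt
      push Not at hlt
      -- (v²-1)(Saa - Sbb / v²) ≥ 0 
      have k2 : ∀ v : ℝ, 1 < v → S b b ≤ v ^ 2 * S a a := by
        intro v hv
        have h1 := key a b hab v (by linarith)
        have e : (v ^ 2 - 1) * S a a + (v⁻¹ ^ 2 - 1) * S b b
            = (v ^ 2 - 1) * (v ^ 2 * S a a - S b b) / v ^ 2 := by
          have : v ≠ 0 := by linarith
          field_simp; ring
        rw [e] at h1
        by_contra hc
        push Not at hc
        have hv2 : 0 < v ^ 2 - 1 := by nlinarith
        have : (v ^ 2 - 1) * (v ^ 2 * S a a - S b b) / v ^ 2 < 0 := by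
          apply div_neg_of_neg_of_pos _ (by positivity)
          exact mul_neg_of_pos_of_neg hv2 (by linarith)
        linarith
      have hlim : Filter.Tendsto (fun v : ℝ => v ^ 2 * S a a) (nhdsWithin 1 (Set.Ioi 1))
          (nhds (1 ^ 2 * S a a)) := by
        apply Filter.Tendsto.mono_left _ nhdsWithin_le_nhds
        exact Continuous.tendsto (by fun_prop) 1
      have := ge_of_tendsto hlim (b := S b b) (by
        filter_upwards [self_mem_nhdsWithin] with v hv using k2 v hv)
      linarith
    intro a b
    by_cases hab : a = b
    · rw [hab]
    · exact le_antisymm (main b a (Ne.symm hab)) (main a b hab)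

lemma sum_ge_card_of_prod {n : ℕ} (y : Fin n → ℝ) (hy : ∀ i, 0 < y i) (h : 1 ≤ ∏ i, y i) :
    (n : ℝ) ≤ ∑ i, y i := by
  have h1 : 0 ≤ Real.log (∏ i, y i) := Real.log_nonneg h
  rw [Real.log_prod (fun i _ => (hy i).ne')] at h1
  have h2 : ∑ i, Real.log (y i) ≤ ∑ i, (y i - 1) :=
    Finset.sum_le_sum fun i _ => Real.log_le_sub_one_of_pos (hy i)
  simp at h2
  linarith

lemma exists_scaling {d n : ℕ} (hd : 0 < d) (hdn : d < n) {m : Fin n → ℕ}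
    (X : ∀ i : Fin n, Matrix (Fin d) (Fin (m i)) ℝ) (k : ∀ i, Fin (m i))
    (hx : GenCols (fun i r => X i r (k i))) :
    ∃ M : Matrix (Fin d) (Fin d) ℝ, M.det = 1 ∧ (∀ i, 0 < frobSq (M * X i)) ∧
      M * (∑ i, (frobSq (M * X i))⁻¹ • (X i * (X i)ᵀ)) * Mᵀ
        = ((n : ℝ) / d) • (1 : Matrix (Fin d) (Fin d) ℝ) := by
  obtain ⟨M, hM, hpos, hmin⟩ := exists_minimizer hd hdn X k hx
  refine ⟨M, hM, hpos, ?_⟩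
  set T := ∑ i, (frobSq (M * X i))⁻¹ • (X i * (X i)ᵀ) with hT
  have hTt : Tᵀ = T := by
    rw [hT, Matrix.transpose_sum]
    simp [Matrix.transpose_mul]
  have htr : ∀ N : Matrix (Fin d) (Fin d) ℝ, (N * T * Nᵀ).trace =
      ∑ i, (frobSq (M * X i))⁻¹ * frobSq (N * X i) := by
    intro N
    rw [hT, Matrix.mul_sum, Matrix.sum_mul, Matrix.trace_sum]
    apply Finset.sum_congr rfl
    intro i _
    rw [frobSq_eq_trace (N * X i), Matrix.mul_smul, Matrix.smul_mul, Matrix.trace_smul,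
      Matrix.transpose_mul, smul_eq_mul]
    simp only [Matrix.mul_assoc]
  have htrM : (M * T * Mᵀ).trace = n := by
    rw [htr]
    simp [inv_mul_cancel₀ (hpos _).ne']
  obtain ⟨hoff, hdiag⟩ := scalar_of_min (M * T * Mᵀ)
    (by simp [Matrix.transpose_mul, hTt, Matrix.mul_assoc]) (by
      intro N hN
      have e : N * (M * T * Mᵀ) * Nᵀ = (N * M) * T * (N * M)ᵀ := by
        simp [Matrix.transpose_mul, Matrix.mul_assoc]
      rw [e, htrM, htr]
      have hdetNM : (N * M).det = 1 := by rw [Matrix.det_mul, hN, hM, one_mul]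
      have hle := hmin (N * M) hdetNM
      have hP : 0 < ∏ i, frobSq (M * X i) := Finset.prod_pos fun i _ => hpos i
      have hP2 : 0 < ∏ i, frobSq (N * M * X i) := hP.trans_le hle
      apply sum_ge_card_of_prod
      · intro i
        apply mul_pos (inv_pos.mpr (hpos i))
        refine lt_of_le_of_ne (frobSq_nonneg _) fun h => ?_
        exact hP2.ne' (Finset.prod_eq_zero (Finset.mem_univ i) h.symm)
      · rw [Finset.prod_mul_distrib, Finset.prod_inv_distrib, ← div_eq_inv_mul, le_div_iff₀ hP]
        linarith)
  have hd' : (d : ℝ) ≠ 0 := by positivity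
  ext a b
  by_cases hab : a = b
  · subst hab
    have : (d : ℝ) * (M * T * Mᵀ) a a = n := by
      rw [← htrM, Matrix.trace]
      simp only [Matrix.diag_apply]
      rw [Finset.sum_congr rfl (fun c _ => hdiag c a)]
      simp
    simp only [Matrix.smul_apply, Matrix.one_apply_eq, smul_eq_mul, mul_one]
    rw [eq_div_iff hd']
    linarith
  · rw [hoff a b hab]
    simp [hab]

lemma exists_diag_scaling {d n : ℕ} (hd : 0 < d) (hdn : d < n) {m : Fin n → ℕ}
    (X : ∀ i : Fin n, Matrix (Fin d) (Fin (m i)) ℝ) (k : ∀ i, Fin (m i))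
    (hx : GenCols (fun i r => X i r (k i))) :
    ∃ (U : Matrix (Fin d) (Fin d) ℝ) (μ : Fin d → ℝ), Uᵀ * U = 1 ∧ U * Uᵀ = 1 ∧ (∀ j, 0 < μ j) ∧
      (∀ i, 0 < frobSq (Matrix.diagonal μ * (Uᵀ * X i))) ∧
      ∑ i, (frobSq (Matrix.diagonal μ * (Uᵀ * X i)))⁻¹ •
        ((Matrix.diagonal μ * (Uᵀ * X i)) * (Matrix.diagonal μ * (Uᵀ * X i))ᵀ)
        = ((n : ℝ) / d) • (1 : Matrix (Fin d) (Fin d) ℝ) := by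
  obtain ⟨M, hM, hpos, hS⟩ := exists_scaling hd hdn X k hx
  have hMu : IsUnit M.det := by rw [hM]; exact isUnit_one
  have hPD : (Mᵀ * M).PosDef := by
    have := Matrix.PosDef.conjTranspose_mul_self M
      (Matrix.mulVec_injective_iff_isUnit.mpr ((Matrix.isUnit_iff_isUnit_det M).mpr hMu))
    simpa [Matrix.conjTranspose_eq_transpose_of_trivial] using this
  have hH := hPD.isHermitian
  set U : Matrix (Fin d) (Fin d) ℝ := (hH.eigenvectorUnitary : Matrix (Fin d) (Fin d) ℝ) with hU
  have hU1 : Uᵀ * U = 1 := by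
    have := Unitary.star_mul_self_of_mem hH.eigenvectorUnitary.2
    simpa [Matrix.star_eq_conjTranspose, Matrix.conjTranspose_eq_transpose_of_trivial] using this
  have hU2 : U * Uᵀ = 1 := by
    have := Unitary.mul_star_self_of_mem hH.eigenvectorUnitary.2
    simpa [Matrix.star_eq_conjTranspose, Matrix.conjTranspose_eq_transpose_of_trivial] using this
  have hspec : Mᵀ * M = U * Matrix.diagonal hH.eigenvalues * Uᵀ := by
    have := hH.spectral_theorem
    rw [Unitary.conjStarAlgAut_apply] at this
    simpa [Matrix.star_eq_conjTranspose, Matrix.conjTranspose_eq_transpose_of_trivial,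
      Function.comp_def] using this
  have hev := hPD.eigenvalues_pos
  set μ : Fin d → ℝ := fun j => Real.sqrt (hH.eigenvalues j) with hμ
  set N := Matrix.diagonal μ * Uᵀ with hN
  have hNN : Nᵀ * N = Mᵀ * M := by
    rw [hspec, hN, Matrix.transpose_mul, Matrix.transpose_transpose, Matrix.diagonal_transpose,
      Matrix.mul_assoc, ← Matrix.mul_assoc (Matrix.diagonal μ), Matrix.diagonal_mul_diagonal,
      ← Matrix.mul_assoc]
    congr 3
    ext j
    exact Real.mul_self_sqrt (hev j).le
  have hfr : ∀ i, frobSq (Matrix.diagonal μ * (Uᵀ * X i)) = frobSq (M * X i) := by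
    intro i
    rw [← Matrix.mul_assoc, ← hN]
    exact frobSq_mul_of_gram _ _ hNN _
  refine ⟨U, μ, hU1, hU2, fun j => Real.sqrt_pos.mpr (hev j), fun i => by rw [hfr]; exact hpos i, ?_⟩
  simp only [hfr]
  set T := ∑ i, (frobSq (M * X i))⁻¹ • (X i * (X i)ᵀ) with hT
  have e1 : ∑ i, (frobSq (M * X i))⁻¹ •
        ((Matrix.diagonal μ * (Uᵀ * X i)) * (Matrix.diagonal μ * (Uᵀ * X i))ᵀ)
        = N * T * Nᵀ := by
    rw [hT, Matrix.mul_sum, Matrix.sum_mul]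
    apply Finset.sum_congr rfl
    intro i _
    rw [← Matrix.mul_assoc, ← hN, Matrix.mul_smul, Matrix.smul_mul, Matrix.transpose_mul]
    simp only [Matrix.mul_assoc]
  rw [e1]
  set Q := N * M⁻¹ with hQ
  have hQM : Q * M = N := by
    rw [hQ, Matrix.mul_assoc, Matrix.nonsing_inv_mul _ hMu, Matrix.mul_one]
  have hQQ : Qᵀ * Q = 1 := by
    rw [hQ, Matrix.transpose_mul, Matrix.mul_assoc, ← Matrix.mul_assoc Nᵀ, hNN,
      Matrix.mul_assoc, Matrix.mul_nonsing_inv _ hMu, Matrix.mul_one, ← Matrix.transpose_mul,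
      Matrix.mul_nonsing_inv _ hMu, Matrix.transpose_one]
  have hQQ' : Q * Qᵀ = 1 := mul_eq_one_comm.mp hQQ
  calc N * T * Nᵀ = Q * (M * T * Mᵀ) * Qᵀ := by
        rw [← hQM, Matrix.transpose_mul]; simp only [Matrix.mul_assoc]
    _ = _ := by rw [hS]; simp [hQQ']

/-- Perturbation direction. -/
def pert {d n : ℕ} {m : Fin n → ℕ} (k : ∀ i, Fin (m i)) (i : Fin n) :
    Matrix (Fin d) (Fin (m i)) ℝ :=
  Matrix.of fun r j => if j = k i then ((i : ℕ) : ℝ) ^ (r : ℕ) else 0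

lemma eventually_gen {d n : ℕ} {m : Fin n → ℕ}
    (X : ∀ i : Fin n, Matrix (Fin d) (Fin (m i)) ℝ) (k : ∀ i, Fin (m i)) :
    ∀ᶠ s in nhdsWithin (0:ℝ) (Set.Ioi 0),
      GenCols (fun (i : Fin n) (r : Fin d) =>
        (X i + s • pert k i : Matrix (Fin d) (Fin (m i)) ℝ) r (k i)) := by
  unfold GenCols
  rw [Filter.eventually_all]
  intro f
  by_cases hf : Function.Injective f
  · let A : Matrix (Fin d) (Fin d) ℝ := Matrix.of (fun r j => ((f j : ℕ) : ℝ) ^ (r : ℕ))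
    let B : Matrix (Fin d) (Fin d) ℝ := Matrix.of (fun r j => X (f j) r (k (f j)))
    have hA : A.det ≠ 0 := by
      have : A = (Matrix.vandermonde fun j => ((f j : ℕ) : ℝ))ᵀ := by
        ext r j; simp [A, Matrix.vandermonde_apply]
      rw [this, Matrix.det_transpose, Matrix.det_vandermonde_ne_zero_iff]
      intro a b hab
      apply hf
      apply Fin.ext
      have hab2 : ((f a : ℕ) : ℝ) = ((f b : ℕ) : ℝ) := hab
      exact_mod_cast hab2
    let P : Polynomial ℝ :=
      ((Polynomial.X : Polynomial ℝ) • A.map Polynomial.C + B.map Polynomial.C).det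
    have hP : P ≠ 0 := by
      intro h0
      apply hA
      rw [← Polynomial.coeff_det_X_add_C_card A B]
      change P.coeff _ = 0
      rw [h0, Polynomial.coeff_zero]
    have hev : ∀ s : ℝ, P.eval s =
        (Matrix.of (fun (r j : Fin d) => (X (f j) + s • pert k (f j) : Matrix (Fin d) (Fin (m (f j))) ℝ) r (k (f j)))).det := by
      intro s
      have h1 : P.eval s = (Polynomial.evalRingHom s) P := rfl
      rw [h1]
      change (Polynomial.evalRingHom s) (Matrix.det _) = _
      rw [RingHom.map_det]
      congr 1
      ext r j
      simp [A, B, pert]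
      ring
    have hfin : {s : ℝ | P.IsRoot s}.Finite := Polynomial.finite_setOfPred_isRoot hP
    have h2 : ∀ᶠ s in nhdsWithin (0:ℝ) (Set.Ioi 0), s ∉ {s : ℝ | P.IsRoot s} := by
      have h3 : ∀ᶠ s in nhdsWithin (0:ℝ) {0}ᶜ, s ∉ {s : ℝ | P.IsRoot s} := by
        have := (hfin.subset (Set.sdiff_subset (t := {(0:ℝ)}))).isClosed.isOpen_compl.mem_nhds
          (x := (0:ℝ)) (by simp)
        filter_upwards [mem_nhdsWithin_of_mem_nhds this, self_mem_nhdsWithin] with s hs hs0 hr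
        exact hs ⟨hr, hs0⟩
      exact h3.filter_mono (nhdsWithin_mono _ (fun s hs => ne_of_gt hs))
    filter_upwards [h2] with s hs _ h0
    apply hs
    change P.eval s = 0
    rw [hev]
    exact h0
  · exact Filter.Eventually.of_forall fun s h => absurd h hf

lemma scaled_bound {d n : ℕ} (hd : 0 < d) (hdn : d < n) {m : Fin n → ℕ}
    (G : ∀ i : Fin n, Matrix (Fin d) (Fin (m i)) ℝ) (k : ∀ i, Fin (m i))
    (hx : GenCols (fun i r => G i r (k i))) (e : ℝ) (he0 : 0 < e) (he : e ≤ 0.31)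
    (hn : ∀ i, (1 - e) * ((d : ℝ) / n) ≤ frobSq (G i) ∧ frobSq (G i) ≤ (1 + e) * ((d : ℝ) / n))
    (hq : ∀ v : Fin d → ℝ, ∑ r, v r ^ 2 = 1 → ∑ i, ∑ l, (∑ r, v r * G i r l) ^ 2 ≤ 1 + e) :
    ∃ W : ∀ i : Fin n, Matrix (Fin d) (Fin (m i)) ℝ,
      EqualNormParseval W ∧ dist2 G W ≤ 12.5 * e * (d : ℝ) ^ 2 := by
  obtain ⟨U, μ, hU1, hU2, hμ, hpos, hS⟩ := exists_diag_scaling hd hdn G k hx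
  have hn0 : (0:ℝ) < n := by exact_mod_cast (by omega : 0 < n)
  have hd0 : (0:ℝ) < d := by exact_mod_cast hd
  have hd1 : (1:ℝ) ≤ d := by exact_mod_cast hd
  set c : ℝ := (d : ℝ) / n with hc
  have hc0 : 0 < c := by positivity
  set Z : ∀ i : Fin n, Matrix (Fin d) (Fin (m i)) ℝ := fun i => Uᵀ * G i with hZ
  have hUt : (Uᵀ)ᵀ * Uᵀ = 1 := by rw [Matrix.transpose_transpose, hU2]
  have hZG : ∀ i, frobSq (Z i) = frobSq (G i) := fun i => frobSq_orth_mul _ hUt _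
  set g : Fin n → ℝ := fun i => frobSq (Z i) with hg
  have hgl : ∀ i, (1 - e) * c ≤ g i := fun i => by rw [hg]; simp only [hZG]; exact (hn i).1
  have hgu : ∀ i, g i ≤ (1 + e) * c := fun i => by rw [hg]; simp only [hZG]; exact (hn i).2
  have hg0 : ∀ i, 0 < g i := fun i => lt_of_lt_of_le (mul_pos (by linarith) hc0) (hgl i)
  set h : Fin n → ℝ := fun i => frobSq (Matrix.diagonal μ * Z i) with hh
  have hh0 : ∀ i, 0 < h i := hpos
  set w : ∀ i : Fin n, Matrix (Fin d) (Fin (m i)) ℝ :=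
    fun i => Real.sqrt (c / h i) • (Matrix.diagonal μ * Z i) with hw
  have hsqh : ∀ i, Real.sqrt (c / h i) ^ 2 = c / h i := fun i =>
    Real.sq_sqrt (div_nonneg hc0.le (hh0 i).le)
  have hsqg : ∀ i, Real.sqrt (c / g i) ^ 2 = c / g i := fun i =>
    Real.sq_sqrt (div_nonneg hc0.le (hg0 i).le)
  -- row masses
  set ρ : Fin n → Fin d → ℝ := fun i j => ∑ l, Z i j l ^ 2 with hρ
  have hρ0 : ∀ i j, 0 ≤ ρ i j := fun i j => Finset.sum_nonneg fun _ _ => sq_nonneg _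
  have hρg : ∀ i, ∑ j, ρ i j = g i := fun i => rfl
  have hρh : ∀ i, ∑ j, μ j ^ 2 * ρ i j = h i := by
    intro i
    rw [hh]
    simp only [frobSq, Matrix.diagonal_mul, hρ, Finset.mul_sum, mul_pow]
  set a : Fin n → Fin d → ℝ := fun i j => c / g i * ρ i j with ha
  set b : Fin n → Fin d → ℝ := fun i j => c / h i * (μ j ^ 2 * ρ i j) with hb
  have hwdiag : ∀ j, ∑ i, b i j = 1 := by
    intro j
    have h1 := congrFun (congrFun hS j) j
    rw [Matrix.sum_apply] at h1
    simp only [Matrix.smul_apply, Matrix.one_apply_eq, smul_eq_mul, mul_one] at h1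
    have h2 : ∑ i, b i j = c * ((n : ℝ) / d) := by
      rw [← h1, Finset.mul_sum]
      apply Finset.sum_congr rfl
      intro i _
      change c / h i * (μ j ^ 2 * ρ i j) = c * ((h i)⁻¹ * _)
      rw [div_eq_mul_inv, mul_assoc]
      congr 2
      rw [Matrix.mul_apply]
      simp only [hρ, Finset.mul_sum]
      apply Finset.sum_congr rfl
      intro l _
      rw [Matrix.transpose_apply, Matrix.diagonal_mul]
      change μ j ^ 2 * Z i j l ^ 2 = μ j * Z i j l * (μ j * Z i j l)
      ring
    rw [h2, hc]
    field_simp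
  have hadiag : ∀ j, ∑ i, a i j ≤ 1 + 2 * e / (1 - e) := by
    intro j
    have h1 : ∑ i, ρ i j ≤ 1 + e := by
      have h2 := hq (fun r => U r j) (by
        have := congrFun (congrFun hU1 j) j
        rw [Matrix.mul_apply] at this
        simpa [sq] using this)
      refine le_trans (le_of_eq ?_) h2
      apply Finset.sum_congr rfl
      intro i _
      simp only [hρ, hZ, Matrix.mul_apply, Matrix.transpose_apply]
    have he1 : 0 < 1 - e := by linarith
    have h3 : ∑ i, a i j ≤ ∑ i, (1 / (1 - e)) * ρ i j := by
      apply Finset.sum_le_sum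
      intro i _
      apply mul_le_mul_of_nonneg_right _ (hρ0 i j)
      rw [div_le_div_iff₀ (hg0 i) he1]
      linarith [hgl i]
    rw [← Finset.mul_sum] at h3
    have h4 : (1 / (1 - e)) * ∑ i, ρ i j ≤ (1 / (1 - e)) * (1 + e) :=
      mul_le_mul_of_nonneg_left h1 (by positivity)
    have h5 : (1 / (1 - e)) * (1 + e) = 1 + 2 * e / (1 - e) := by
      field_simp; ring
    linarith
  have htv := tv_all a b (fun j => μ j ^ 2) (fun i => g i / h i) (2 * e / (1 - e))
    (div_nonneg (by linarith) (by linarith)) (fun i => div_pos (hg0 i) (hh0 i))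
    (fun i j => mul_nonneg (div_nonneg hc0.le (hg0 i).le) (hρ0 i j))
    (by
      intro i j
      have := (hg0 i).ne'
      have := (hh0 i).ne'
      simp only [ha, hb]
      field_simp)
    (by
      intro i
      simp only [ha, hb]
      rw [← Finset.mul_sum, ← Finset.mul_sum, hρg, hρh, div_mul_cancel₀ _ (hg0 i).ne',
        div_mul_cancel₀ _ (hh0 i).ne'])
    hwdiag hadiag
  refine ⟨fun i => U * w i, ⟨?_, ?_⟩, ?_⟩
  · have h1 : frameOp w = 1 := by
      have : frameOp w = c • ∑ i, (frobSq (Matrix.diagonal μ * Z i))⁻¹ •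
        ((Matrix.diagonal μ * Z i) * (Matrix.diagonal μ * Z i)ᵀ) := by
        rw [frameOp, Finset.smul_sum]
        apply Finset.sum_congr rfl
        intro i _
        simp only [hw]
        rw [Matrix.transpose_smul, Matrix.smul_mul, Matrix.mul_smul, smul_smul, smul_smul, ← sq,
          hsqh, div_eq_mul_inv]
      rw [this, hS, smul_smul, hc]
      have : (d : ℝ) / n * (n / d) = 1 := by field_simp
      rw [this, one_smul]
    have h2 : frameOp (fun i => U * w i) = U * frameOp w * Uᵀ := by
      simp only [frameOp, Matrix.mul_sum, Matrix.sum_mul, Matrix.transpose_mul, Matrix.mul_assoc]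
    rw [h2, h1, Matrix.mul_one, hU2]
  · intro i
    rw [frobSq_orth_mul _ hU1, hw]
    simp only
    rw [frobSq_smul, hsqh]
    exact div_mul_cancel₀ _ (hh0 i).ne'
  · have hterm : ∀ i, frobSq (G i - U * w i) ≤
        2 * (e ^ 2 * c) + 2 * ∑ j, |a i j - b i j| := by
      intro i
      have h1 : frobSq (G i - U * w i) = frobSq (Z i - w i) := by
        rw [← frobSq_orth_mul Uᵀ hUt (G i - U * w i), Matrix.mul_sub, ← Matrix.mul_assoc, hU1,
          Matrix.one_mul]
      have h2 : Z i - w i = (Z i - Real.sqrt (c / g i) • Z i) +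
          (Real.sqrt (c / g i) • Z i - w i) := by abel
      have h3 : frobSq (Z i - Real.sqrt (c / g i) • Z i) ≤ e ^ 2 * c := by
        have : Z i - Real.sqrt (c / g i) • Z i = (1 - Real.sqrt (c / g i)) • Z i := by
          rw [sub_smul, one_smul]
        rw [this, frobSq_smul]
        change (1 - Real.sqrt (c / g i)) ^ 2 * g i ≤ _
        set q := Real.sqrt (c / g i) with hqd
        have hq0 : 0 ≤ q := Real.sqrt_nonneg _
        have hq2 : q ^ 2 * g i = c := by rw [hsqg, div_mul_cancel₀ _ (hg0 i).ne']
        have e1 : (1 - q) ^ 2 * g i * c ≤ (g i - c) ^ 2 := by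
          have : (g i - c) ^ 2 = ((1 - q) ^ 2 * g i) * ((1 + q) ^ 2 * g i) := by
            rw [← hq2]; ring
          rw [this]
          apply mul_le_mul_of_nonneg_left _ (mul_nonneg (sq_nonneg _) (hg0 i).le)
          nlinarith [hg0 i, mul_nonneg hq0 (hg0 i).le]
        have e2 : (g i - c) ^ 2 ≤ (e * c) ^ 2 := by
          apply sq_le_sq'
          · linarith [hgl i]
          · linarith [hgu i]
        have e3 : (1 - q) ^ 2 * g i * c ≤ (e ^ 2 * c) * c := by
          refine (e1.trans e2).trans (le_of_eq (by ring))
        exact le_of_mul_le_mul_right e3 hc0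
      have h4 : frobSq (Real.sqrt (c / g i) • Z i - w i) ≤ ∑ j, |a i j - b i j| := by
        rw [frobSq]
        apply Finset.sum_le_sum
        intro j _
        have e1 : ∀ l, (Real.sqrt (c / g i) • Z i - w i) j l =
            (Real.sqrt (c / g i) - Real.sqrt (c / h i) * μ j) * Z i j l := by
          intro l
          simp only [hw, Matrix.sub_apply, Matrix.smul_apply, smul_eq_mul, Matrix.diagonal_mul]
          ring
        simp only [e1, mul_pow, ← Finset.mul_sum]
        have e2 : a i j - b i j = (c / g i - c / h i * μ j ^ 2) * ρ i j := by
          simp only [ha, hb]; ring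
        rw [e2, abs_mul, abs_of_nonneg (hρ0 i j)]
        apply mul_le_mul_of_nonneg_right _ (hρ0 i j)
        have p0 := Real.sqrt_nonneg (c / g i)
        have q0 : 0 ≤ Real.sqrt (c / h i) * μ j := mul_nonneg (Real.sqrt_nonneg _) (hμ j).le
        have e4 : c / g i - c / h i * μ j ^ 2 =
            Real.sqrt (c / g i) ^ 2 - (Real.sqrt (c / h i) * μ j) ^ 2 := by
          rw [mul_pow, hsqg, hsqh]
        rw [e4]
        set p := Real.sqrt (c / g i)
        set q := Real.sqrt (c / h i) * μ j
        have e3 : p ^ 2 - q ^ 2 = (p - q) * (p + q) := by ring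
        rw [e3, abs_mul, ← sq_abs, sq]
        apply mul_le_mul_of_nonneg_left _ (abs_nonneg _)
        rw [abs_of_nonneg (add_nonneg p0 q0)]
        rw [abs_le]
        constructor <;> linarith
      rw [h1, h2]
      refine (frobSq_add_le _ _).trans ?_
      linarith
    have hsum : dist2 G (fun i => U * w i) ≤
        2 * (e ^ 2 * d) + 2 * ∑ i, ∑ j, |a i j - b i j| := by
      rw [dist2]
      refine (Finset.sum_le_sum fun i _ => hterm i).trans (le_of_eq ?_)
      rw [Finset.sum_add_distrib, ← Finset.mul_sum (f := fun i => ∑ j, |a i j - b i j|)]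
      simp only [Finset.sum_const, Finset.card_univ, Fintype.card_fin, nsmul_eq_mul, hc]
      field_simp
    have hδ : 2 * e / (1 - e) ≤ 2.9 * e := by
      rw [div_le_iff₀ (by linarith)]
      nlinarith
    have hd2 : (d : ℝ) ≤ (d : ℝ) ^ 2 := by nlinarith
    have f1 : e ^ 2 * d ≤ 0.31 * e * (d : ℝ) ^ 2 := by
      have : e ^ 2 ≤ 0.31 * e := by nlinarith
      exact mul_le_mul this hd2 hd0.le (by positivity)
    have f2 : 2 * (d : ℝ) ^ 2 * (2 * e / (1 - e)) ≤ 2 * (d : ℝ) ^ 2 * (2.9 * e) :=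
      mul_le_mul_of_nonneg_left hδ (by positivity)
    have f3 : 0 ≤ e * (d : ℝ) ^ 2 := by positivity
    linarith

lemma quad_bound {d n : ℕ} {m : Fin n → ℕ} (F : ∀ i : Fin n, Matrix (Fin d) (Fin (m i)) ℝ)
    (ε : ℝ) (h : ((1 + ε) • (1 : Matrix (Fin d) (Fin d) ℝ) - frameOp F).PosSemidef)
    (v : Fin d → ℝ) (hv : ∑ r, v r ^ 2 = 1) :
    ∑ i, ∑ l, (∑ r, v r * F i r l) ^ 2 ≤ 1 + ε := by
  have h1 := h.dotProduct_mulVec_nonneg v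
  rw [Matrix.sub_mulVec, dotProduct_sub, Matrix.smul_mulVec, Matrix.one_mulVec,
    dotProduct_smul] at h1
  have h2 : star v ⬝ᵥ v = 1 := by
    rw [← hv]; simp [dotProduct, sq]
  have h3 : star v ⬝ᵥ (frameOp F *ᵥ v) = ∑ i, ∑ l, (∑ r, v r * F i r l) ^ 2 := by
    rw [frameOp, Matrix.sum_mulVec, dotProduct_sum]
    apply Finset.sum_congr rfl
    intro i _
    rw [← Matrix.mulVec_mulVec, Matrix.dotProduct_mulVec, Matrix.mulVec_transpose]
    simp [dotProduct, Matrix.vecMul, sq]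
  rw [h2, h3, smul_eq_mul, mul_one] at h1
  linarith

lemma quad_frob {d k : ℕ} (X : Matrix (Fin d) (Fin k) ℝ)
    (v : Fin d → ℝ) (hv : ∑ r, v r ^ 2 = 1) :
    ∑ l, (∑ r, v r * X r l) ^ 2 ≤ frobSq X := by
  rw [frobSq, Finset.sum_comm]
  apply Finset.sum_le_sum
  intro l _
  have := Finset.sum_mul_sq_le_sq_mul_sq Finset.univ v (fun r => X r l)
  rwa [hv, one_mul] at this

lemma quad_pert {d n : ℕ} {m : Fin n → ℕ} (F V : ∀ i : Fin n, Matrix (Fin d) (Fin (m i)) ℝ)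
    (θ s : ℝ) (hθ : 0 < θ) (v : Fin d → ℝ) (hv : ∑ r, v r ^ 2 = 1) :
    ∑ i, ∑ l, (∑ r, v r * (F i + s • V i) r l) ^ 2 ≤
      (1 + θ) * ∑ i, ∑ l, (∑ r, v r * F i r l) ^ 2 + (1 + θ⁻¹) * s ^ 2 * ∑ i, frobSq (V i) := by
  have h1 : ∑ i, ∑ l, (∑ r, v r * V i r l) ^ 2 ≤ ∑ i, frobSq (V i) :=
    Finset.sum_le_sum fun i _ => quad_frob _ _ hv
  have h2 : ∑ i, ∑ l, (∑ r, v r * (F i + s • V i) r l) ^ 2 ≤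
      (1 + θ) * ∑ i, ∑ l, (∑ r, v r * F i r l) ^ 2 +
        (1 + θ⁻¹) * s ^ 2 * ∑ i, ∑ l, (∑ r, v r * V i r l) ^ 2 := by
    simp only [Finset.mul_sum (s := (Finset.univ : Finset (Fin n)))]
    rw [← Finset.sum_add_distrib]
    apply Finset.sum_le_sum
    intro i _
    rw [Finset.mul_sum, Finset.mul_sum, ← Finset.sum_add_distrib]
    apply Finset.sum_le_sum
    intro l _
    have e1 : ∑ r, v r * (F i + s • V i) r l = ∑ r, v r * F i r l + s * ∑ r, v r * V i r l := by
      rw [Finset.mul_sum, ← Finset.sum_add_distrib]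
      apply Finset.sum_congr rfl
      intro r _
      simp only [Matrix.add_apply, Matrix.smul_apply, smul_eq_mul]
      ring
    rw [e1]
    set p := ∑ r, v r * F i r l
    set q := ∑ r, v r * V i r l
    have e2 : (1 + θ) * p ^ 2 + (1 + θ⁻¹) * s ^ 2 * q ^ 2 - (p + s * q) ^ 2
        = θ⁻¹ * (θ * p - s * q) ^ 2 := by field_simp; ring
    have : 0 ≤ θ⁻¹ * (θ * p - s * q) ^ 2 := by positivity
    linarith
  refine h2.trans ?_
  have : 0 ≤ (1 + θ⁻¹) * s ^ 2 := by positivity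
  have := mul_le_mul_of_nonneg_left h1 this
  linarith

end helpers


/-- **Paulsen's problem for matrix frames.**  Every `ε`-nearly equal-norm Parseval matrix
frame (`ε < 0.3`, `n > d`) is within squared distance `26 ε d²` of an equal-norm Parseval
matrix frame. -/
theorem paulsen_matrix_frames {d n : ℕ} (hd : 0 < d) (hdn : d < n) {m : Fin n → ℕ}
    {ε : ℝ} (hε0 : 0 < ε) (hε : ε < 0.3)
    (F : ∀ i : Fin n, Matrix (Fin d) (Fin (m i)) ℝ)
    (hF : NearlyENParseval ε F) :
    ∃ W : ∀ i : Fin n, Matrix (Fin d) (Fin (m i)) ℝ,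
      EqualNormParseval W ∧ dist2 F W ≤ 26 * ε * (d : ℝ) ^ 2 := by
  obtain ⟨-, hF2, hF3⟩ := hF
  have hn0 : (0:ℝ) < n := by exact_mod_cast (by omega : 0 < n)
  have hd0 : (0:ℝ) < d := by exact_mod_cast hd
  have hd1 : (1:ℝ) ≤ d := by exact_mod_cast hd
  have hc0 : 0 < (d:ℝ) / n := by positivity
  have hε' : ε < 0.3 := hε
  have hm : ∀ i, 0 < m i := by
    intro i
    by_contra h0
    have h0' : m i = 0 := by omega
    have : frobSq (F i) = 0 := by
      rw [frobSq]
      apply Finset.sum_eq_zero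
      intro r _
      apply Finset.sum_eq_zero
      intro j _
      exact absurd j.2 (by omega)
    have h1 := (hF3 i).1
    rw [this] at h1
    have : 0 < (1 - ε) * ((d:ℝ) / n) := mul_pos (by norm_num at hε'; linarith) hc0
    linarith
  let k : ∀ i, Fin (m i) := fun i => ⟨0, hm i⟩
  let V : ∀ i : Fin n, Matrix (Fin d) (Fin (m i)) ℝ := fun i => pert k i
  have hgen := eventually_gen F k
  set e := 1.01 * ε with he
  set θ := 0.005 * ε with hθ
  have hθ0 : 0 < θ := by positivity
  set K := ∑ i, frobSq (V i) with hK
  have hfc : ∀ i, Continuous fun s : ℝ => frobSq (F i + s • V i) := by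
    intro i
    unfold frobSq
    simp only [Matrix.add_apply, Matrix.smul_apply, smul_eq_mul]
    fun_prop
  have hev1 : ∀ᶠ s in nhdsWithin (0:ℝ) (Set.Ioi 0), ∀ i,
      (1 - e) * ((d : ℝ) / n) ≤ frobSq (F i + s • V i) ∧
        frobSq (F i + s • V i) ≤ (1 + e) * ((d : ℝ) / n) := by
    rw [Filter.eventually_all]
    intro i
    apply Filter.Eventually.filter_mono nhdsWithin_le_nhds
    have ht : Filter.Tendsto (fun s : ℝ => frobSq (F i + s • V i)) (nhds 0)
        (nhds (frobSq (F i))) := by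
      have := (hfc i).tendsto 0
      simpa using this
    have g1 : (1 - e) * ((d : ℝ) / n) < frobSq (F i) := by
      refine lt_of_lt_of_le ?_ (hF3 i).1
      exact mul_lt_mul_of_pos_right (by rw [he]; linarith) hc0
    have g2 : frobSq (F i) < (1 + e) * ((d : ℝ) / n) := by
      refine lt_of_le_of_lt (hF3 i).2 ?_
      exact mul_lt_mul_of_pos_right (by rw [he]; linarith) hc0
    filter_upwards [ht.eventually_const_lt g1, ht.eventually_lt_const g2] with s h1 h2
    exact ⟨h1.le, h2.le⟩
  have hev2 : ∀ᶠ s in nhdsWithin (0:ℝ) (Set.Ioi 0), (1 + θ⁻¹) * s ^ 2 * K < 0.001 * ε := by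
    apply Filter.Eventually.filter_mono nhdsWithin_le_nhds
    have ht : Filter.Tendsto (fun s : ℝ => (1 + θ⁻¹) * s ^ 2 * K) (nhds 0) (nhds 0) := by
      have := (by fun_prop : Continuous fun s : ℝ => (1 + θ⁻¹) * s ^ 2 * K).tendsto 0
      simpa using this
    exact ht.eventually_lt_const (by positivity)
  obtain ⟨s, hs1, hs2, hs3⟩ := (hgen.and (hev1.and hev2)).exists
  have hK0 : 0 ≤ K := Finset.sum_nonneg fun i _ => frobSq_nonneg _
  norm_num at hε'
  obtain ⟨W, hW, hdist⟩ := scaled_bound hd hdn (fun i => F i + s • V i) k hs1 e (by positivity)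
    (by rw [he]; linarith) hs2 (by
      intro v hv
      refine (quad_pert F V θ s hθ0 v hv).trans ?_
      have h1 := quad_bound F ε hF2 v hv
      have h2 : (1 + θ) * ∑ i, ∑ l, (∑ r, v r * F i r l) ^ 2 ≤ (1 + θ) * (1 + ε) :=
        mul_le_mul_of_nonneg_left h1 (by positivity)
      have h3 : (1 + θ) * (1 + ε) ≤ 1 + 1.0065 * ε := by
        rw [hθ]; nlinarith
      rw [he]
      linarith)
  refine ⟨W, hW, ?_⟩
  have hsK : s ^ 2 * K ≤ 0.001 * ε := by
    have : 0 ≤ θ⁻¹ * (s ^ 2 * K) := by positivity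
    nlinarith
  have hA : dist2 F W ≤ 2 * (s ^ 2 * K) + 2 * dist2 (fun i => F i + s • V i) W := by
    rw [hK, dist2, dist2, Finset.mul_sum, Finset.mul_sum, Finset.mul_sum,
      ← Finset.sum_add_distrib]
    apply Finset.sum_le_sum
    intro i _
    have h1 : F i - W i = (-s) • V i + ((F i + s • V i) - W i) := by
      rw [neg_smul]; abel
    rw [h1]
    refine (frobSq_add_le _ _).trans (le_of_eq ?_)
    rw [frobSq_smul]
    ring
  have hd2 : (1:ℝ) ≤ (d : ℝ) ^ 2 := by nlinarith
  have f1 : ε ≤ ε * (d : ℝ) ^ 2 := by nlinarith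
  rw [he] at hdist
  nlinarith

end MFrames
end

section
/- Let F = (X_1, …, X_n) with X_i ∈ ℝ^{d×d_i} be a matrix frame. For every c ∈ ℚ^n with all coordinates positive, the value f_F(c) is finite (i.e. f_F(c) > −∞) if and only if c ∈ K_F. In other words, the domain of the restriction of f_F to ℚ^n_{>0} is exactly K_F ∩ ℚ^n_{>0}. -/
open scoped BigOperators
open Matrix

namespace MFrames

theorem det_le_add_rankone {d : ℕ} {A : Matrix (Fin d) (Fin d) ℝ} (hA : A.PosDef)
    (w : ℝ) (hw : 0 ≤ w) (u : Fin d → ℝ) :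
    A.det ≤ (A + w • vecMulVec u u).det := by
  have h1 : A + w • vecMulVec u u
      = A + replicateCol Unit (w • u) * replicateRow Unit u := by
    rw [← vecMulVec_eq, smul_vecMulVec]
  have hu : IsUnit A.det := hA.det_pos.ne'.isUnit
  rw [h1, det_add_replicateCol_mul_replicateRow hu]
  have h2 := hA.inv.posSemidef.dotProduct_mulVec_nonneg u
  have h3 : (1 + replicateRow Unit u * A⁻¹ * replicateCol Unit (w • u)).det
      = 1 + w * (u ⬝ᵥ (A⁻¹ *ᵥ u)) := by
    rw [det_unique, Matrix.mul_assoc]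
    simp [Matrix.mul_apply, dotProduct, mulVec, Finset.mul_sum]
  rw [h3]
  simp at h2
  have := hA.det_pos
  nlinarith [mul_nonneg hw h2, mul_nonneg this.le (mul_nonneg hw h2)]

theorem det_le_add_sum {d : ℕ} {κ : Type*} {A : Matrix (Fin d) (Fin d) ℝ} (hA : A.PosDef)
    (w : κ → ℝ) (hw : ∀ k, 0 ≤ w k) (x : κ → Fin d → ℝ) (s : Finset κ) :
    A.det ≤ (A + ∑ k ∈ s, w k • vecMulVec (x k) (x k)).det := by
  classical
  have hps : ∀ k, (w k • vecMulVec (x k) (x k)).PosSemidef := fun k => by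
    have := posSemidef_vecMulVec_self_star (x k)
    simp at this
    exact this.smul (hw k)
  induction s using Finset.induction_on with
  | empty => simp
  | insert a s ha ih =>
    rw [Finset.sum_insert ha, add_comm (w a • _), ← add_assoc]
    refine ih.trans (det_le_add_rankone ?_ _ (hw a) _)
    exact hA.add_posSemidef (posSemidef_sum _ fun k _ => hps k)

theorem weighted_eq {d : ℕ} {κ : Type*} [Fintype κ] (w : κ → ℝ) (x : κ → Fin d → ℝ) :
    (∑ k, w k • vecMulVec (x k) (x k)) =
      (Matrix.of x)ᵀ * (Matrix.of fun k => w k • x k) := by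
  ext a b
  simp [Matrix.sum_apply, Matrix.mul_apply, vecMulVec_apply]
  refine Finset.sum_congr rfl fun i _ => by ring

/-- lower bound -/
theorem det_lower {d : ℕ} {κ : Type*} [Fintype κ] (w : κ → ℝ) (hw : ∀ k, 0 < w k)
    (x : κ → Fin d → ℝ) (p : Fin d → κ) (hp : (Matrix.of fun j => x (p j)).det ≠ 0) :
    (Matrix.of fun j => x (p j)).det ^ 2 * ∏ j, w (p j) ≤
      (∑ k, w k • vecMulVec (x k) (x k)).det := by
  classical
  have hinj : Function.Injective p := by
    intro i j hij
    by_contra hne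
    exact hp (Matrix.det_zero_of_row_eq hne (by ext; simp [hij]))
  set P := (Matrix.of fun j => x (p j)) with hP
  set D : Matrix (Fin d) (Fin d) ℝ := diagonal fun j => w (p j) with hD
  have hA : (Pᵀ * D * P).PosDef := by
    have hDp : D.PosDef := PosDef.diagonal fun j => hw _
    have := hDp.conjTranspose_mul_mul_same (B := P)
      (Matrix.mulVec_injective_iff_isUnit.2 ((Matrix.isUnit_iff_isUnit_det P).2 hp.isUnit))
    simpa using this
  have hAeq : Pᵀ * D * P = ∑ k ∈ Finset.univ.image p, w k • vecMulVec (x k) (x k) := by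
    rw [Finset.sum_image (fun a _ b _ h => hinj h)]
    rw [weighted_eq (fun j => w (p j)) (fun j => x (p j)), Matrix.mul_assoc]
    congr 1
    ext a b
    simp [hD, hP]
  have := det_le_add_sum hA w (fun k => (hw k).le) x (Finset.univ.image p)ᶜ
  nth_rewrite 2 [hAeq] at this
  rw [Finset.sum_add_sum_compl] at this
  refine le_trans (le_of_eq ?_) this
  rw [det_mul, det_mul, det_transpose, hD, det_diagonal]
  ring

/-- expansion -/
theorem det_expand {d : ℕ} {κ : Type*} [Fintype κ] (w : κ → ℝ)
    (x : κ → Fin d → ℝ) :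
    (∑ k, w k • vecMulVec (x k) (x k)).det = 
      ∑ p : Fin d → κ, (∏ j, w (p j)) * ((∏ j, x (p j) j) * (Matrix.of fun j => x (p j)).det) := by
  classical
  have h1 : (∑ k, w k • vecMulVec (x k) (x k)) =
    (fun r => ∑ k, (w k * x k r) • x k : Fin d → Fin d → ℝ) := by
    ext a b
    simp [Matrix.sum_apply, vecMulVec_apply, Finset.sum_apply]
    refine Finset.sum_congr rfl fun i _ => by ring
  rw [h1]
  have h2 := (Matrix.detRowAlternating (n := Fin d) (R := ℝ)).toMultilinearMap.map_sum
    (fun r k => (w k * x k r) • x k)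
  refine h2.trans (Finset.sum_congr rfl fun p _ => ?_)
  have h3 := (Matrix.detRowAlternating (n := Fin d) (R := ℝ)).toMultilinearMap.map_smul_univ
    (fun r => (w (p r) * x (p r) r)) (fun r => x (p r))
  refine h3.trans ?_
  rw [Finset.prod_mul_distrib, smul_eq_mul, mul_assoc]
  rfl

/-- layer cake -/
theorem layer_integral {M N t : ℝ} (h1 : M ≤ t) (h2 : t ≤ N) :
    MeasureTheory.IntegrableOn (fun τ => if τ ≤ t then (1:ℝ) else 0) (Set.Ioc M N) ∧
    ∫ τ in Set.Ioc M N, (if τ ≤ t then (1:ℝ) else 0) = t - M := by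
  have h : (fun τ => if τ ≤ t then (1:ℝ) else 0) = (Set.Iic t).indicator (fun _ => (1:ℝ)) := by
    ext τ; simp [Set.indicator]
  have hi : Set.Ioc M N ∩ Set.Iic t = Set.Ioc M t := by
    ext y
    simp only [Set.mem_inter_iff, Set.mem_Ioc, Set.mem_Iic]
    constructor
    · rintro ⟨⟨a, b⟩, c⟩; exact ⟨a, c⟩
    · rintro ⟨a, c⟩; exact ⟨⟨a, c.trans h2⟩, c⟩
  constructor
  · rw [h]
    exact (MeasureTheory.integrableOn_const (by simp)).indicator measurableSet_Iic
  · rw [h, MeasureTheory.setIntegral_indicator measurableSet_Iic, hi]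
    simp [h1]

theorem majorize {ι κ : Type*} [Fintype ι] [Fintype κ] (c a : ι → ℝ) (b : κ → ℝ)
    (htot : ∑ i, c i = Fintype.card κ)
    (h : ∀ τ, ∑ i, c i * (if τ ≤ a i then (1:ℝ) else 0) ≤ ∑ j, (if τ ≤ b j then (1:ℝ) else 0)) :
    ∑ i, a i * c i ≤ ∑ j, b j := by
  obtain ⟨N, hN⟩ : ∃ N : ℝ, (∀ i, |a i| ≤ N) ∧ ∀ j, |b j| ≤ N := by
    refine ⟨∑ i, |a i| + ∑ j, |b j|, fun i => ?_, fun j => ?_⟩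
    · have := Finset.single_le_sum (f := fun i => |a i|) (fun i _ => abs_nonneg _) (Finset.mem_univ i)
      have h2 : 0 ≤ ∑ j, |b j| := Finset.sum_nonneg fun _ _ => abs_nonneg _
      linarith
    · have := Finset.single_le_sum (f := fun i => |b i|) (fun i _ => abs_nonneg _) (Finset.mem_univ j)
      have h2 : 0 ≤ ∑ j, |a j| := Finset.sum_nonneg fun _ _ => abs_nonneg _
      linarith
  have ha := fun i => layer_integral (abs_le.1 (hN.1 i)).1 (abs_le.1 (hN.1 i)).2
  have hb := fun i => layer_integral (abs_le.1 (hN.2 i)).1 (abs_le.1 (hN.2 i)).2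
  have hI := MeasureTheory.integral_mono
    (μ := MeasureTheory.volume.restrict (Set.Ioc (-N) N))
    (MeasureTheory.integrable_finsetSum Finset.univ fun i _ => (ha i).1.const_mul (c i))
    (MeasureTheory.integrable_finsetSum Finset.univ fun i _ => (hb i).1) h
  rw [MeasureTheory.integral_finsetSum _ (fun i _ => (ha i).1.const_mul (c i)),
    MeasureTheory.integral_finsetSum _ (fun i _ => (hb i).1)] at hI
  simp only [MeasureTheory.integral_const_mul, (ha _).2, (hb _).2] at hI
  simp only [mul_sub, Finset.sum_sub_distrib, ← Finset.sum_mul, htot] at hI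
  simp at hI
  simpa [mul_comm] using hI

/-- maximal-weight basis -/
theorem exists_max_basis {d : ℕ} {κ : Type*} [Fintype κ] (x : κ → Fin d → ℝ)
    (h0 : ∃ p : Fin d → κ, (Matrix.of fun j => x (p j)).det ≠ 0) (t : κ → ℝ) :
    ∃ p : Fin d → κ, (Matrix.of fun j => x (p j)).det ≠ 0 ∧
      ∀ τ, ∀ q, τ ≤ t q → x q ∈ Submodule.span ℝ ((fun j => x (p j)) '' {j | τ ≤ t (p j)}) := by
  classical
  obtain ⟨p, hp, hmax⟩ := Finset.exists_max_image
    (Finset.univ.filter fun p : Fin d → κ => (Matrix.of fun j => x (p j)).det ≠ 0)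
    (fun p => ∑ j, t (p j)) (by obtain ⟨p, hp⟩ := h0; exact ⟨p, by simpa using hp⟩)
  simp only [Finset.mem_filter, Finset.mem_univ, true_and] at hp hmax
  refine ⟨p, hp, fun τ q hq => ?_⟩
  -- expand
  have hsol : ∃ v : Fin d → ℝ, x q = ∑ j, v j • x (p j) := by
    refine ⟨x q ᵥ* (Matrix.of fun j => x (p j))⁻¹, ?_⟩
    have : (x q ᵥ* (Matrix.of fun j => x (p j))⁻¹) ᵥ* (Matrix.of fun j => x (p j)) = x q := by
      rw [vecMul_vecMul, Matrix.nonsing_inv_mul _ hp.isUnit, vecMul_one]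
    nth_rewrite 1 [← this]
    ext r
    simp [vecMul, dotProduct, Finset.sum_apply]
  obtain ⟨v, hv⟩ := hsol
  have hz : ∀ j, t (p j) < τ → v j = 0 := by
    intro j hj
    by_contra hvj
    have hdet : (Matrix.of fun i => x (Function.update p j q i)).det ≠ 0 := by
      have e1 : (Matrix.of fun i => x (Function.update p j q i)) =
          (Matrix.of fun i => x (p i)).updateRow j (∑ i, v i • (Matrix.of fun i => x (p i)) i) := by
        ext a b
        by_cases h : a = j
        · subst h; simp [hv, Finset.sum_apply]
        · simp [h]
      rw [e1, Matrix.det_updateRow_sum]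
      exact mul_ne_zero hvj hp
    have := hmax _ hdet
    have e2 : ∑ i, t (Function.update p j q i) = ∑ i, t (p i) - t (p j) + t q := by
      rw [← Finset.add_sum_erase _ _ (Finset.mem_univ j),
        ← Finset.add_sum_erase _ (fun i => t (p i)) (Finset.mem_univ j)]
      rw [Finset.sum_congr rfl (g := fun i => t (p i))]
      · simp; ring
      · intro i hi; simp [Finset.ne_of_mem_erase hi]
    linarith
  rw [hv]
  refine Submodule.sum_mem _ fun j _ => ?_
  by_cases hj : τ ≤ t (p j)
  · exact Submodule.smul_mem _ _ (Submodule.subset_span ⟨j, hj, rfl⟩)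
  · rw [hz j (not_le.1 hj)]; simp

theorem op_eq {d n : ℕ} {m : Fin n → ℕ} (F : ∀ i : Fin n, Matrix (Fin d) (Fin (m i)) ℝ)
    (w : Fin n → ℝ) : ∑ i, w i • (F i * (F i)ᵀ) =
      ∑ q : (i : Fin n) × Fin (m i), w q.1 • vecMulVec (col F q) (col F q) := by
  rw [Fintype.sum_sigma]
  refine Finset.sum_congr rfl fun i _ => ?_
  ext a b
  simp [Matrix.sum_apply, Matrix.mul_apply, vecMulVec_apply, col, Finset.mul_sum]

theorem col_mem {d n : ℕ} {m : Fin n → ℕ} (F : ∀ i : Fin n, Matrix (Fin d) (Fin (m i)) ℝ)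
    (I : Finset (Fin n)) (q : (i : Fin n) × Fin (m i)) (hq : q.1 ∈ I) :
    col F q ∈ ⨆ i ∈ I, colSpan (F i) :=
  (le_iSup₂_of_le (f := fun i (_ : i ∈ I) => colSpan (F i)) q.1 hq le_rfl)
    (Submodule.subset_span ⟨q.2, rfl⟩)

theorem exists_basis {d n : ℕ} {m : Fin n → ℕ}
    (F : ∀ i : Fin n, Matrix (Fin d) (Fin (m i)) ℝ) (hF : IsMatrixFrame F) :
    ∃ p : Fin d → ((i : Fin n) × Fin (m i)), (Matrix.of fun j => col F (p j)).det ≠ 0 := by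
  by_contra! h
  have h1 : (frameOp F).det ≠ 0 := hF.det_pos.ne'
  have h2 := op_eq F (fun _ => 1)
  simp only [one_smul] at h2
  have h3 := det_expand (fun _ => 1) (col F)
  simp only [one_smul] at h3
  apply h1
  rw [frameOp, h2, h3]
  exact Finset.sum_eq_zero fun p _ => by rw [h p]; simp

theorem det_pos' {d n : ℕ} {m : Fin n → ℕ}
    (F : ∀ i : Fin n, Matrix (Fin d) (Fin (m i)) ℝ) (hF : IsMatrixFrame F) (t : Fin n → ℝ) :
    0 < (∑ i, Real.exp (t i) • (F i * (F i)ᵀ)).det := by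
  obtain ⟨p, hp⟩ := exists_basis F hF
  rw [op_eq F (fun i => Real.exp (t i))]
  refine lt_of_lt_of_le ?_ (det_lower (fun q => Real.exp (t q.1)) (fun _ => Real.exp_pos _) (col F) p hp)
  have : 0 < ∏ j, Real.exp (t (p j).1) := Finset.prod_pos fun _ _ => Real.exp_pos _
  positivity

theorem nonneg_of_bdd {a b B : ℝ} (h : ∀ s : ℝ, 0 ≤ s → B ≤ b + s * a) : 0 ≤ a := by
  by_contra! ha
  have h1 := h ((|b - B| + 1) / (-a)) (div_nonneg (by positivity) (by linarith))
  have h2 : (|b - B| + 1) / (-a) * a = -(|b - B| + 1) := by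
    rw [div_mul_eq_mul_div, div_eq_iff (by linarith)]; ring
  rw [h2] at h1
  have := le_abs_self (b - B)
  linarith

theorem card_le {d n : ℕ} {m : Fin n → ℕ}
    (F : ∀ i : Fin n, Matrix (Fin d) (Fin (m i)) ℝ) (I : Finset (Fin n))
    (p : Fin d → ((i : Fin n) × Fin (m i))) (hp : (Matrix.of fun j => col F (p j)).det ≠ 0) :
    (Finset.univ.filter fun j => (p j).1 ∈ I).card ≤
      Module.finrank ℝ ↥(⨆ i ∈ I, colSpan (F i)) := by
  have hli : LinearIndependent ℝ (fun j => col F (p j)) :=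
    Matrix.linearIndependent_rows_of_det_ne_zero hp
  set S := Finset.univ.filter fun j => (p j).1 ∈ I with hS
  have h1 : LinearIndependent ℝ (fun j : S => col F (p j)) :=
    hli.comp (fun j : S => (j : Fin d)) Subtype.val_injective
  have h2 : LinearIndependent ℝ
      (fun j : S => (⟨col F (p j), col_mem F I _ (Finset.mem_filter.1 j.2).2⟩ :
        ↥(⨆ i ∈ I, colSpan (F i)))) :=
    LinearIndependent.of_comp (Submodule.subtype _) h1
  simpa using h2.fintype_card_le_finrank

theorem forward {d n : ℕ} {m : Fin n → ℕ}
    (F : ∀ i : Fin n, Matrix (Fin d) (Fin (m i)) ℝ) (hF : IsMatrixFrame F)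
    (c : Fin n → ℝ) (hc : ∀ i, 0 < c i)
    (h : BddBelow (Set.range (obj F c))) : c ∈ orbitPolytope F := by
  classical
  obtain ⟨B, hB⟩ := h
  have hB' : ∀ t, B ≤ obj F c t := fun t => hB ⟨t, rfl⟩
  refine ⟨fun i => (hc i).le, ?_, fun I => ?_⟩
  · have key : ∀ s : ℝ, obj F c (fun _ => s) =
        Real.log (frameOp F).det + s * (d - ∑ i, c i) := by
      intro s
      have := hF.det_pos
      simp only [obj, Phi]
      rw [← Finset.smul_sum, det_smul, Real.log_mul (by positivity) (by exact this.ne'),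
        Real.log_pow, Real.log_exp, ← Finset.mul_sum, frameOp]
      simp; ring
    have h1 : 0 ≤ (d:ℝ) - ∑ i, c i := nonneg_of_bdd (b := Real.log (frameOp F).det) (B := B)
      fun s _ => by rw [← key]; exact hB' _
    have h2 : 0 ≤ -((d:ℝ) - ∑ i, c i) := nonneg_of_bdd (b := Real.log (frameOp F).det) (B := B)
      fun s _ => by
        have := hB' (fun _ => -s)
        rw [key] at this; linarith
    linarith
  · set r := Module.finrank ℝ ↥(⨆ i ∈ I, colSpan (F i)) with hr
    set C : ℝ := 1 + ∑ p : Fin d → ((i : Fin n) × Fin (m i)),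
      |(∏ j, col F (p j) j) * (Matrix.of fun j => col F (p j)).det| with hC
    have hCpos : 0 < C := by positivity
    suffices 0 ≤ (r:ℝ) - ∑ i ∈ I, c i by linarith
    refine nonneg_of_bdd (b := Real.log C) (B := B) fun s hs => ?_
    refine (hB' (fun i => if i ∈ I then s else 0)).trans ?_
    have hdet : (∑ i, Real.exp (if i ∈ I then s else 0) • (F i * (F i)ᵀ)).det
        ≤ C * Real.exp (s * r) := by
      rw [op_eq F (fun i => Real.exp (if i ∈ I then s else 0)),
        det_expand (fun q => Real.exp (if q.1 ∈ I then s else 0)) (col F)]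
      have : ∀ p : Fin d → ((i : Fin n) × Fin (m i)),
        (∏ j, Real.exp (if (p j).1 ∈ I then s else 0)) * ((∏ j, col F (p j) j) *
          (Matrix.of fun j => col F (p j)).det) ≤
        |(∏ j, col F (p j) j) * (Matrix.of fun j => col F (p j)).det| * Real.exp (s * r) := by
        intro p
        by_cases hp : (Matrix.of fun j => col F (p j)).det = 0
        · rw [hp]; simp
        have hcard := card_le F I p hp
        rw [← Real.exp_sum, mul_comm]
        refine mul_le_mul (le_abs_self _) (Real.exp_le_exp.2 ?_) (Real.exp_pos _).le (abs_nonneg _)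
        rw [← Finset.sum_filter, Finset.sum_const, nsmul_eq_mul, mul_comm]
        exact mul_le_mul_of_nonneg_left (by exact_mod_cast hcard) hs
      refine (Finset.sum_le_sum fun p _ => this p).trans ?_
      rw [← Finset.sum_mul]
      exact mul_le_mul_of_nonneg_right (by linarith) (Real.exp_pos _).le
    have hlog := Real.log_le_log (det_pos' F hF _) hdet
    rw [Real.log_mul hCpos.ne' (Real.exp_pos _).ne', Real.log_exp] at hlog
    have hsum : ∑ i, (if i ∈ I then s else 0) * c i = s * ∑ i ∈ I, c i := by
      simp [ite_mul, Finset.mul_sum]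
    simp only [obj, Phi]
    rw [hsum]
    linarith

theorem backward {d n : ℕ} {m : Fin n → ℕ}
    (F : ∀ i : Fin n, Matrix (Fin d) (Fin (m i)) ℝ) (hF : IsMatrixFrame F)
    (c : Fin n → ℝ) (h : c ∈ orbitPolytope F) :
    BddBelow (Set.range (obj F c)) := by
  classical
  obtain ⟨hc, htot, hI⟩ := h
  have hbdd : ∃ B : ℝ, ∀ p : Fin d → ((i : Fin n) × Fin (m i)),
      B ≤ Real.log ((Matrix.of fun j => col F (p j)).det ^ 2) := by
    obtain ⟨B, hB⟩ := (Set.finite_range fun p : Fin d → ((i : Fin n) × Fin (m i)) =>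
      Real.log ((Matrix.of fun j => col F (p j)).det ^ 2)).bddBelow
    exact ⟨B, fun p => hB ⟨p, rfl⟩⟩
  obtain ⟨B, hB⟩ := hbdd
  refine ⟨B, ?_⟩
  rintro _ ⟨t, rfl⟩
  obtain ⟨p, hp, hspan⟩ := exists_max_basis (col F) (exists_basis F hF) (fun q => t q.1)
  have hlow := det_lower (fun q => Real.exp (t q.1)) (fun _ => Real.exp_pos _) (col F) p hp
  rw [← op_eq F (fun i => Real.exp (t i)), ← Real.exp_sum] at hlow
  have hlog := Real.log_le_log (by positivity) hlow
  rw [Real.log_mul (by positivity) (Real.exp_pos _).ne', Real.log_exp] at hlog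
  have hmaj : ∑ i, t i * c i ≤ ∑ j, t (p j).1 := by
    refine majorize c t (fun j => t (p j).1) (by simpa using htot) fun τ => ?_
    have e1 : ∑ i, c i * (if τ ≤ t i then (1:ℝ) else 0)
        = ∑ i ∈ Finset.univ.filter (fun i => τ ≤ t i), c i := by
      simp [Finset.sum_filter]
    have e2 : ∑ j, (if τ ≤ t (p j).1 then (1:ℝ) else 0)
        = ((Finset.univ.filter (fun j => τ ≤ t (p j).1)).card : ℝ) := by
      simp
    rw [e1, e2]
    refine (hI _).trans ?_
    set S := Finset.univ.filter (fun j => τ ≤ t (p j).1) with hS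
    have hle : (⨆ i ∈ Finset.univ.filter (fun i => τ ≤ t i), colSpan (F i)) ≤
        Submodule.span ℝ ((S.image fun j => col F (p j) : Finset (Fin d → ℝ)) : Set (Fin d → ℝ)) := by
      refine iSup₂_le fun i hi => Submodule.span_le.2 ?_
      rintro _ ⟨k, rfl⟩
      have := hspan τ ⟨i, k⟩ (Finset.mem_filter.1 hi).2
      refine Submodule.span_mono ?_ this
      rintro _ ⟨j, hj, rfl⟩
      simp only [Finset.coe_image]
      exact ⟨j, by simpa [hS] using hj, rfl⟩
    exact_mod_cast (Submodule.finrank_mono hle).trans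
      ((finrank_span_finset_le_card _).trans Finset.card_image_le)
  have := hB p
  simp only [obj, Phi]
  linarith

/-- **Theorem 1(1).**  For a matrix frame `F` and positive rational weights `c`, the value
`f_F(c) = inf_t (Φ_F(t) − ⟨t,c⟩)` is finite (the objective is bounded below) if and only if
`c` lies in the orbit polytope `K_F`. -/
theorem domain_of_f {d n : ℕ} {m : Fin n → ℕ}
    (F : ∀ i : Fin n, Matrix (Fin d) (Fin (m i)) ℝ) (hF : IsMatrixFrame F)
    (c : Fin n → ℚ) (hc : ∀ i, 0 < c i) :
    BddBelow (Set.range (obj F fun i => (c i : ℝ))) ↔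
      (fun i => (c i : ℝ)) ∈ orbitPolytope F :=
  ⟨forward F hF _ fun i => by exact_mod_cast hc i, backward F hF _⟩

end MFrames
end
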